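/- L R τ = 0 and R τ = (1/2)(1 ⊗ I_s)(τᵀ R τ). -/

import Mathlib

open Matrix Finset
open scoped Kronecker

noncomputable section

/-- The `ns × s` matrix `1 ⊗ Iₛ`, where `1` is the all-ones column vector. -/
def oneKron (n s : ℕ) : Matrix (Fin n × Fin s) (Fin s) ℝ :=
  Matrix.of fun p b => if p.2 = b then 1 else 0

/-- The `ns × ns` matrix `J ⊗ Iₛ`, where `J` is the all-ones matrix. -/
def JKron (n s : ℕ) : Matrix (Fin n × Fin s) (Fin n × Fin s) ℝ :=
  (Matrix.of fun _ _ : Fin n => (1 : ℝ)) ⊗ₖ (1 : Matrix (Fin s) (Fin s) ℝ)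

/-- The Laplacian matrix of a graph whose edges `{i,j}` are weighted by
positive definite `s × s` matrices `W i j`: the `(i,i)` block is
`Σ_{j ∼ i} (W i j)⁻¹`, the `(i,j)` block for `i ≠ j` is `-(W i j)⁻¹` if `i ∼ j`
and `0` otherwise. -/
def lap {n s : ℕ} (G : SimpleGraph (Fin n)) [DecidableRel G.Adj]
    (W : Fin n → Fin n → Matrix (Fin s) (Fin s) ℝ) :
    Matrix (Fin n × Fin s) (Fin n × Fin s) ℝ :=
  Matrix.of fun p q =>
    if p.1 = q.1 then (∑ k ∈ univ.filter (fun k => G.Adj p.1 k), (W p.1 k)⁻¹) p.2 q.2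
    else if G.Adj p.1 q.1 then -((W p.1 q.1)⁻¹ p.2 q.2) else 0

/-- The four Penrose conditions: `Adag` is a Moore–Penrose inverse of `A`. -/
def IsMoorePenrose {m : Type*} [Fintype m] (A Adag : Matrix m m ℝ) : Prop :=
  A * Adag * A = A ∧ Adag * A * Adag = Adag ∧ (A * Adag)ᵀ = A * Adag ∧ (Adag * A)ᵀ = Adag * A

/-- The `s × s` block of an `ns × ns` matrix in block position `(i, j)`. -/
def blk {n s : ℕ} (A : Matrix (Fin n × Fin s) (Fin n × Fin s) ℝ) (i j : Fin n) :
    Matrix (Fin s) (Fin s) ℝ :=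
  Matrix.of fun a b => A (i, a) (j, b)

/-- The resistance matrix built from a Moore–Penrose inverse `Ldag` of the Laplacian:
its `(i,j)` block is `K_{ii} + K_{jj} - 2 K_{ij}`, where `K_{ij}` are the blocks of `Ldag`. -/
def resist {n s : ℕ} (Ldag : Matrix (Fin n × Fin s) (Fin n × Fin s) ℝ) :
    Matrix (Fin n × Fin s) (Fin n × Fin s) ℝ :=
  Matrix.of fun p q =>
    Ldag (p.1, p.2) (p.1, q.2) + Ldag (q.1, p.2) (q.1, q.2) - 2 * Ldag p q

/-- The `ns × s` matrix `τ`, whose `i`-th block is `2 Iₛ - Σ_{j ∼ i} (W i j)⁻¹ R_{ji}`. -/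
def tauMat {n s : ℕ} (G : SimpleGraph (Fin n)) [DecidableRel G.Adj]
    (W : Fin n → Fin n → Matrix (Fin s) (Fin s) ℝ)
    (R : Matrix (Fin n × Fin s) (Fin n × Fin s) ℝ) :
    Matrix (Fin n × Fin s) (Fin s) ℝ :=
  Matrix.of fun p b =>
    ((2 : ℝ) • (1 : Matrix (Fin s) (Fin s) ℝ) -
      ∑ j ∈ univ.filter (fun j => G.Adj p.1 j), (W p.1 j)⁻¹ * blk R j p.1) p.2 b

/-- The block diagonal matrix `X̄` with the same diagonal blocks as `X`. -/
def bdiag {n s : ℕ} (X : Matrix (Fin n × Fin s) (Fin n × Fin s) ℝ) :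
    Matrix (Fin n × Fin s) (Fin n × Fin s) ℝ :=
  Matrix.of fun p q => if p.1 = q.1 then X (p.1, p.2) (p.1, q.2) else 0

/-! Write `U = 1 ⊗ Iₛ`; let `K` satisfy `L K L = L`, and let `D` be the column of diagonal
blocks of `K`. Then `R = D Uᵀ + U E - 2 K` for some `E`, and `L U = 0` gives
`L R + 2 = L D Uᵀ + 2 (1 - L K)`. Since `(1 - L K) L = 0`, the rows of `1 - L K` lie in the left
null space of `L`, so `L R + 2 = X Uᵀ` for some `X`. The block columns of `X Uᵀ` all equal `X`;
comparing diagonal blocks shows `X = τ`, so `L R = τ Uᵀ - 2`. Multiplying by `Uᵀ` on the left gives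
`Uᵀ τ = 2 Iₛ`, whence `L R τ = τ (Uᵀ τ) - 2 τ = 0`. Therefore `R τ = U C` for some `C`, and
`τᵀ R τ = (τᵀ U) C = 2 C`. -/

/-- A matrix of `s × s` blocks whose null space consists of the constant block vectors, i.e. is the
column space of `1 ⊗ Iₛ`; for the Laplacian of a graph with positive definite weights this expresses
connectedness. -/
def HasConstKernel {n s : ℕ} (L : Matrix (Fin n × Fin s) (Fin n × Fin s) ℝ) : Prop :=
  ∀ v : Fin n × Fin s → ℝ, L *ᵥ v = 0 ↔ ∃ c : Fin s → ℝ, v = oneKron n s *ᵥ c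

/-- The diagonal blocks of an `ns × ns` matrix, stacked vertically into an `ns × s` matrix. -/
def diagCol {n s : ℕ} (X : Matrix (Fin n × Fin s) (Fin n × Fin s) ℝ) :
    Matrix (Fin n × Fin s) (Fin s) ℝ :=
  Matrix.of fun p b => X p (p.1, b)

/-- The matrix `τ` of an arbitrary block matrix `L` in place of a graph Laplacian, with
resistances taken from `K`: its `i`-th block is `(L R)ᵢᵢ + 2 Iₛ`, where `R = resist K`. For a graph
Laplacian this is `tauMat` because the diagonal blocks of `R` vanish. -/
def resistTau {n s : ℕ} (L K : Matrix (Fin n × Fin s) (Fin n × Fin s) ℝ) :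
    Matrix (Fin n × Fin s) (Fin s) ℝ :=
  diagCol (L * resist K + (2 : ℝ) • 1)

section BlockMatrices

variable {n s : ℕ} {m : Type*}

lemma oneKron_mul_apply (C : Matrix (Fin s) m ℝ) (p : Fin n × Fin s) (j : m) :
    (oneKron n s * C) p j = C p.2 j := by
  simp [oneKron, Matrix.mul_apply]

lemma mul_oneKron_transpose_apply (X : Matrix m (Fin s) ℝ) (i : m) (q : Fin n × Fin s) :
    (X * (oneKron n s)ᵀ) i q = X i q.2 := by
  simp [oneKron, Matrix.mul_apply]

lemma mul_oneKron_transpose_injective [NeZero n] :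
    Function.Injective fun X : Matrix m (Fin s) ℝ => X * (oneKron n s)ᵀ := by
  intro X Y hXY
  ext i a
  simpa only [mul_oneKron_transpose_apply] using congrFun₂ hXY i (0, a)

lemma diagCol_mul_oneKron_transpose (X : Matrix (Fin n × Fin s) (Fin s) ℝ) :
    diagCol (X * (oneKron n s)ᵀ) = X := by
  ext p b
  exact mul_oneKron_transpose_apply X p (p.1, b)

lemma blk_mul (A B : Matrix (Fin n × Fin s) (Fin n × Fin s) ℝ) (i j : Fin n) :
    blk (A * B) i j = ∑ k, blk A i k * blk B k j := by
  ext a b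
  simp only [blk, Matrix.of_apply, Matrix.mul_apply, Fintype.sum_prod_type, Matrix.sum_apply]

lemma resist_eq (K : Matrix (Fin n × Fin s) (Fin n × Fin s) ℝ) :
    resist K =
      diagCol K * (oneKron n s)ᵀ + oneKron n s * (diagCol Kᵀ)ᵀ - (2 : ℝ) • K := by
  ext p q
  simp [resist, diagCol, oneKron_mul_apply, mul_oneKron_transpose_apply]

lemma blk_resist_self (K : Matrix (Fin n × Fin s) (Fin n × Fin s) ℝ) (i : Fin n) :
    blk (resist K) i i = 0 := by
  ext a b
  simp only [blk, resist, Matrix.of_apply, Matrix.zero_apply]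
  ring

end BlockMatrices

section Laplacian

variable {n s : ℕ} (G : SimpleGraph (Fin n)) [DecidableRel G.Adj]
  (W : Fin n → Fin n → Matrix (Fin s) (Fin s) ℝ)

lemma blk_lap (i k : Fin n) :
    blk (lap G W) i k =
      (if i = k then ∑ j ∈ univ.filter (fun j => G.Adj i j), (W i j)⁻¹ else 0) -
        if G.Adj i k then (W i k)⁻¹ else 0 := by
  ext a b
  by_cases hik : i = k
  · subst hik
    simp [blk, lap]
  · by_cases hadj : G.Adj i k <;> simp [blk, lap, hik, hadj]

lemma blk_lap_mul (X : Matrix (Fin n × Fin s) (Fin n × Fin s) ℝ) (i j : Fin n) :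
    blk (lap G W * X) i j =
      ∑ k ∈ univ.filter (fun k => G.Adj i k), (W i k)⁻¹ * (blk X i j - blk X k j) := by
  simp only [blk_mul, blk_lap, Matrix.sub_mul, ite_mul, Matrix.zero_mul, Finset.sum_sub_distrib,
    Finset.sum_ite_eq, Finset.mem_univ, if_true, Matrix.mul_sub, Finset.sum_mul, Finset.sum_filter]

lemma tauMat_resist (K : Matrix (Fin n × Fin s) (Fin n × Fin s) ℝ) :
    tauMat G W (resist K) = resistTau (lap G W) K := by
  ext ⟨i, a⟩ b
  calc tauMat G W (resist K) (i, a) b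
      = ((2 : ℝ) • (1 : Matrix (Fin s) (Fin s) ℝ) + blk (lap G W * resist K) i i) a b := by
        simp only [blk_lap_mul, blk_resist_self, zero_sub, Matrix.mul_neg,
          Finset.sum_neg_distrib, ← sub_eq_add_neg, tauMat, Matrix.of_apply]
    _ = resistTau (lap G W) K (i, a) b := by
        simp [resistTau, diagCol, blk, Matrix.one_apply, add_comm]

end Laplacian

section ConstKernel

variable {n s : ℕ} {L K : Matrix (Fin n × Fin s) (Fin n × Fin s) ℝ}

lemma HasConstKernel.mul_oneKron (hL : HasConstKernel L) : L * oneKron n s = 0 := by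
  refine Matrix.ext_of_mulVec_single fun b => ?_
  rw [← Matrix.mulVec_mulVec, Matrix.zero_mulVec]
  exact (hL _).2 ⟨_, rfl⟩

lemma HasConstKernel.exists_eq_oneKron_mul {m : Type*} (hL : HasConstKernel L)
    {M : Matrix (Fin n × Fin s) m ℝ} (hM : L * M = 0) :
    ∃ C : Matrix (Fin s) m ℝ, M = oneKron n s * C := by
  have hcol (j : m) : ∃ c : Fin s → ℝ, M.col j = oneKron n s *ᵥ c :=
    (hL _).1 (funext fun i => congrFun₂ hM i j)
  choose c hc using hcol
  exact ⟨Matrix.of fun a j => c j a, Matrix.ext fun i j => congrFun (hc j) i⟩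

lemma HasConstKernel.oneKron_transpose_mul (hLt : HasConstKernel Lᵀ) :
    (oneKron n s)ᵀ * L = 0 := by
  simpa using congrArg Matrix.transpose hLt.mul_oneKron

lemma HasConstKernel.exists_eq_mul_oneKron_transpose {m : Type*} (hLt : HasConstKernel Lᵀ)
    {M : Matrix m (Fin n × Fin s) ℝ} (hM : M * L = 0) :
    ∃ C : Matrix m (Fin s) ℝ, M = C * (oneKron n s)ᵀ := by
  obtain ⟨C, hC⟩ := hLt.exists_eq_oneKron_mul (M := Mᵀ) (by
    rw [← Matrix.transpose_mul, hM, Matrix.transpose_zero])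
  exact ⟨Cᵀ, by simpa using congrArg Matrix.transpose hC⟩

lemma mul_resist_add_two (hL : HasConstKernel L) (hLt : HasConstKernel Lᵀ) (hK : L * K * L = L) :
    L * resist K + (2 : ℝ) • 1 = resistTau L K * (oneKron n s)ᵀ := by
  obtain ⟨C, hC⟩ := hLt.exists_eq_mul_oneKron_transpose (M := 1 - L * K) (by
    rw [Matrix.sub_mul, Matrix.one_mul, hK, sub_self])
  have hfactor : L * resist K + (2 : ℝ) • 1 =
      (L * diagCol K + (2 : ℝ) • C) * (oneKron n s)ᵀ := calc
    L * resist K + (2 : ℝ) • 1 = L * diagCol K * (oneKron n s)ᵀ + (2 : ℝ) • (1 - L * K) := by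
      rw [resist_eq, Matrix.mul_sub, Matrix.mul_add, ← Matrix.mul_assoc, ← Matrix.mul_assoc,
        hL.mul_oneKron, Matrix.zero_mul, add_zero, Matrix.mul_smul, smul_sub]
      abel
    _ = _ := by rw [hC, Matrix.add_mul, Matrix.smul_mul]
  rw [resistTau, hfactor, diagCol_mul_oneKron_transpose]

lemma oneKron_transpose_mul_resistTau [NeZero n] (hL : HasConstKernel L)
    (hLt : HasConstKernel Lᵀ) (hK : L * K * L = L) :
    (oneKron n s)ᵀ * resistTau L K = (2 : ℝ) • 1 := by
  refine mul_oneKron_transpose_injective (n := n) ?_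
  calc (oneKron n s)ᵀ * resistTau L K * (oneKron n s)ᵀ
      = (oneKron n s)ᵀ * (L * resist K + (2 : ℝ) • 1) := by
        rw [mul_resist_add_two hL hLt hK, Matrix.mul_assoc]
    _ = (2 : ℝ) • (1 : Matrix (Fin s) (Fin s) ℝ) * (oneKron n s)ᵀ := by
        rw [Matrix.mul_add, ← Matrix.mul_assoc, hLt.oneKron_transpose_mul, Matrix.zero_mul,
          zero_add, Matrix.mul_smul, Matrix.mul_one, Matrix.smul_mul, Matrix.one_mul]

lemma mul_resist_mul_resistTau [NeZero n] (hL : HasConstKernel L) (hLt : HasConstKernel Lᵀ)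
    (hK : L * K * L = L) : L * resist K * resistTau L K = 0 := by
  rw [eq_sub_of_add_eq (mul_resist_add_two hL hLt hK), Matrix.sub_mul, Matrix.mul_assoc,
    oneKron_transpose_mul_resistTau hL hLt hK, Matrix.mul_smul, Matrix.mul_one, Matrix.smul_mul,
    Matrix.one_mul, sub_self]

theorem lap_resist_tau_eq_zero_general [NeZero n] (hL : HasConstKernel L)
    (hLt : HasConstKernel Lᵀ) (hK : L * K * L = L) :
    L * resist K * resistTau L K = 0 ∧
      resist K * resistTau L K =
        ((1 : ℝ) / 2) • (oneKron n s * ((resistTau L K)ᵀ * resist K * resistTau L K)) := by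
  have hzero := mul_resist_mul_resistTau hL hLt hK
  obtain ⟨C, hC⟩ := hL.exists_eq_oneKron_mul ((Matrix.mul_assoc _ _ _).symm.trans hzero)
  have htau : (resistTau L K)ᵀ * oneKron n s = (2 : ℝ) • 1 := by
    simpa using congrArg Matrix.transpose (oneKron_transpose_mul_resistTau hL hLt hK)
  refine ⟨hzero, ?_⟩
  rw [Matrix.mul_assoc _ (resist K), hC, ← Matrix.mul_assoc _ _ C, htau]
  simp [smul_smul]

end ConstKernel

/-- `L R τ = 0` and `R τ = (1/2)(1 ⊗ Iₛ)(τᵀ R τ)`. -/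
theorem lap_resist_tau_eq_zero
    (n s : ℕ) (hn : 2 ≤ n) (hs : 1 ≤ s)
    (G : SimpleGraph (Fin n)) [DecidableRel G.Adj] (hconn : G.Connected)
    (W : Fin n → Fin n → Matrix (Fin s) (Fin s) ℝ)
    (hWsymm : ∀ i j, W i j = W j i)
    (hWpd : ∀ i j, G.Adj i j → (W i j).PosDef)
    (hPSD : (lap G W).PosSemidef)
    (hrank : (lap G W).rank = n * s - s)
    (hker : ∀ v : Fin n × Fin s → ℝ,
      lap G W *ᵥ v = 0 ↔ ∃ c : Fin s → ℝ, v = oneKron n s *ᵥ c)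
    (Ldag : Matrix (Fin n × Fin s) (Fin n × Fin s) ℝ)
    (hMP : IsMoorePenrose (lap G W) Ldag)
    (R : Matrix (Fin n × Fin s) (Fin n × Fin s) ℝ)
    (hR : R = resist Ldag) :
    lap G W * R * tauMat G W R = 0 ∧
      R * tauMat G W R =
        ((1 : ℝ) / 2) • (oneKron n s * ((tauMat G W R)ᵀ * R * tauMat G W R)) := by
  have : NeZero n := ⟨by omega⟩
  have hsymm : (lap G W)ᵀ = lap G W := hPSD.isHermitian
  subst hR
  rw [tauMat_resist]
  exact lap_resist_tau_eq_zero_general hker (hsymm.symm ▸ hker) hMP.1
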